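/- Let α, β, γ ∈ ℂ with α+β ∉ ℤ and γ ∉ ℤ. Then there exists ε > 0 such that for all x, y, z ∈ ℂ with |x| < ε, |y| < ε, |z| < ε, the triple series ∑_{j,k,m ≥ 0} (α)_j (β)_k (1−γ)_m (γ)_{j+k−m} / (j! · k! · m! · (α+β)_{j+k−m}) · x^j y^k z^m converges absolutely and equals (1−z)^{α+β−1} · (1−xz)^{γ−α−β} · (1−x)^{β−γ} · (1−y)^{−β} · ₂F₁[β, α+β−γ; α+β; (x−y)(1−z)/((1−y)(1−xz))]. -/

import Mathlib

open Finset

/-- Pochhammer symbol `(a)_k` for complex `a` and integer `k`. -/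
noncomputable def cpoch (a : ℂ) (k : ℤ) : ℂ :=
  if 0 ≤ k then ∏ i ∈ Finset.range k.toNat, (a + (i : ℂ))
  else (∏ i ∈ Finset.range (-k).toNat, (a + (k : ℂ) + (i : ℂ)))⁻¹

/-- Gauss hypergeometric series `₂F₁[a, b; c; w]`. -/
noncomputable def F21 (a b c w : ℂ) : ℂ :=
  ∑' ℓ : ℕ, cpoch a ℓ * cpoch b ℓ / ((ℓ.factorial : ℂ) * cpoch c ℓ) * w ^ ℓ

/-- General term of the Gelfand–Graev–Retakh triple series. -/
noncomputable def ggrTerm (α β γ x y z : ℂ) : ℕ × ℕ × ℕ → ℂ := fun p =>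
  cpoch α p.1 * cpoch β p.2.1 * cpoch (1 - γ) p.2.2 *
      cpoch γ ((p.1 : ℤ) + (p.2.1 : ℤ) - (p.2.2 : ℤ)) /
    ((p.1.factorial : ℂ) * (p.2.1.factorial : ℂ) * (p.2.2.factorial : ℂ) *
      cpoch (α + β) ((p.1 : ℤ) + (p.2.1 : ℤ) - (p.2.2 : ℤ))) *
    x ^ p.1 * y ^ p.2.1 * z ^ p.2.2

/-!
Write `h_n(a) = (a)_n / n! = Ring.multichoose a n` and let `g_n^{(a,b)}(x, y)` be the coefficient of
`t^n` in `(1 - x t)^{-a} (1 - y t)^{-b}`.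

With `c = α + β`, the coefficient of `x^j y^k z^m` depends on `(j, k)` only through `n = j + k`,
apart from the factor `h_j(α) h_k(β)`. A three-term recurrence in `n` shows that the sum over `m` is
`(1 - z)^{c-1} g_n^{(γ,c-γ)}(1, z) / h_n(c)`, so the triple series equals
`(1 - z)^{c-1} ∑ₙ g_n^{(α,β)}(x, y) g_n^{(γ,c-γ)}(1, z) / h_n(c)`.

This bilinear sum is evaluated by expanding `g_n^{(a,b)}(x, y)` in powers of `y - x`: the inner
series is then a derivative of the generating function of the other factor. One expansion leaves
`∑ₙ g_n^{(γ,c-γ)}(u, v) h_n(β) / h_n(c)` with `u = (y-x)/(1-x)` and `v = z(y-x)/(1-xz)`; a second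
one turns this into a Gauss series.
-/

open Ring (multichoose)

section Algebra

variable {R : Type*} [CommRing R] [BinomialRing R]

lemma choose_mul_multichoose_add (a : R) (k i : ℕ) :
    ((k + i).choose k : R) * multichoose a (k + i) =
      multichoose a k * multichoose (a + k) i := by
  have h := Ring.choose_add_smul_choose (a + k - 1) k i
  rw [show a + k - 1 + i = a + (k + i : ℕ) - 1 by push_cast; ring, ← Ring.multichoose_eq,
    ← Ring.multichoose_eq, ← Nat.choose_symm_add, nsmul_eq_mul] at h
  rw [h, Ring.multichoose_eq (a + k), mul_comm]
  congr 2
  push_cast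
  ring

lemma succ_mul_multichoose_succ (a : R) (n : ℕ) :
    ((n : R) + 1) * multichoose a (n + 1) = (a + n) * multichoose a n := by
  simpa [mul_comm] using choose_mul_multichoose_add a n 1

lemma sum_antidiagonal_multichoose_mul (a b : R) (n : ℕ) :
    ∑ p ∈ antidiagonal n, multichoose a p.1 * multichoose b p.2 = multichoose (a + b) n := by
  have choose_neg (r : R) (m : ℕ) : Ring.choose (-r) m = (-1) ^ m * multichoose r m := by
    simp [Ring.choose_neg', Units.smul_def]
  have h := Ring.add_choose_eq n (Commute.all (-a) (-b))
  rw [← neg_add, choose_neg] at h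
  have sign_mul_sign : (-1) ^ n * (-1) ^ n = (1 : R) := by rw [← mul_pow]; simp
  rw [← one_mul (multichoose (a + b) n), ← sign_mul_sign, mul_assoc, h, mul_sum]
  refine sum_congr rfl fun p hp => ?_
  rw [choose_neg, choose_neg, mul_mul_mul_comm, ← pow_add, mem_antidiagonal.mp hp, ← mul_assoc,
    sign_mul_sign, one_mul]

/-- The `n`-th two-variable Lagrange polynomial `g_n^{(a, b)}(x, y)`, that is, the coefficient of
`t ^ n` in `(1 - x t)^{-a} (1 - y t)^{-b}`. -/
def lagrangePoly (a b x y : R) (n : ℕ) : R :=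
  ∑ p ∈ antidiagonal n, multichoose a p.1 * x ^ p.1 * (multichoose b p.2 * y ^ p.2)

lemma lagrangePoly_zero (a b x y : R) : lagrangePoly a b x y 0 = 1 := by
  simp [lagrangePoly]

lemma lagrangePoly_one (a b x y : R) : lagrangePoly a b x y 1 = a * x + b * y := by
  simp [lagrangePoly, Nat.antidiagonal_succ, add_comm]

lemma lagrangePoly_mul_mul (a b x y t : R) (n : ℕ) :
    lagrangePoly a b (x * t) (y * t) n = lagrangePoly a b x y n * t ^ n := by
  rw [lagrangePoly, lagrangePoly, sum_mul]
  refine sum_congr rfl fun p hp => ?_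
  rw [← mem_antidiagonal.mp hp]
  ring

section PowerSeries

open PowerSeries

lemma one_sub_mul_derivative_mk_multichoose (a x : R) :
    (1 - C x * X) * d⁄dX R (PowerSeries.mk fun n => multichoose a n * x ^ n) =
      C (a * x) * PowerSeries.mk fun n => multichoose a n * x ^ n := by
  ext n
  rw [sub_mul, one_mul, map_sub, mul_assoc, coeff_C_mul, coeff_C_mul, coeff_derivative, coeff_mk,
    coeff_mk]
  rcases n with _ | n
  · simp
  · rw [coeff_succ_X_mul, coeff_derivative, coeff_mk]
    have h := succ_mul_multichoose_succ a (n + 1)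
    push_cast at h ⊢
    linear_combination x ^ (n + 2) * h

-- Both factors of the generating function satisfy a first-order differential equation, hence so
-- does their product.
lemma lagrangePoly_add_two (a b x y : R) (n : ℕ) :
    ((n : R) + 2) * lagrangePoly a b x y (n + 2) =
      (((n : R) + 1) * (x + y) + a * x + b * y) * lagrangePoly a b x y (n + 1) -
        x * y * (n + a + b) * lagrangePoly a b x y n := by
  set F : R⟦X⟧ := PowerSeries.mk fun n => multichoose a n * x ^ n with hF
  set G : R⟦X⟧ := PowerSeries.mk fun n => multichoose b n * y ^ n with hG
  have coeff_FG (n : ℕ) : lagrangePoly a b x y n = coeff n (F * G) := by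
    simp [coeff_mul, lagrangePoly, hF, hG]
  have ode : (1 - C (x + y) * X + C (x * y) * X * X) * d⁄dX R (F * G) =
      (C (a * x + b * y) - C (x * y * (a + b)) * X) * (F * G) := by
    have odeF := one_sub_mul_derivative_mk_multichoose a x
    have odeG := one_sub_mul_derivative_mk_multichoose b y
    rw [← hF] at odeF
    rw [← hG] at odeG
    rw [Derivation.leibniz, smul_eq_mul, smul_eq_mul]
    simp only [map_add, map_mul] at odeF odeG ⊢
    linear_combination (1 - C y * X) * G * odeF + (1 - C x * X) * F * odeG
  have h := congrArg (coeff (n + 1)) ode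
  simp only [sub_mul, add_mul, one_mul, map_sub, map_add, mul_assoc, coeff_C_mul,
    coeff_succ_X_mul, coeff_derivative, ← coeff_FG] at h
  rcases n with _ | n
  · simp only [coeff_zero_X_mul, Nat.cast_zero, Nat.cast_one, zero_add] at h ⊢
    linear_combination h
  · simp only [coeff_succ_X_mul, coeff_derivative, ← coeff_FG, Nat.cast_add, Nat.cast_one] at h ⊢
    linear_combination h

end PowerSeries

lemma multichoose_mul_add_pow (b x y : R) (n : ℕ) :
    multichoose b n * (x + y) ^ n = ∑ p ∈ antidiagonal n,
      multichoose b p.1 * x ^ p.1 * (multichoose (b + p.1) p.2 * y ^ p.2) := by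
  rw [(Commute.all x y).add_pow', mul_sum]
  refine sum_congr rfl fun p hp => ?_
  have h := choose_mul_multichoose_add b p.1 p.2
  rw [mem_antidiagonal.mp hp] at h
  rw [nsmul_eq_mul]
  linear_combination x ^ p.1 * y ^ p.2 * h

lemma sum_antidiagonal_antidiagonal_left_comm {M : Type*} [AddCommMonoid M] (f : ℕ → ℕ → ℕ → M)
    (n : ℕ) :
    ∑ p ∈ antidiagonal n, ∑ q ∈ antidiagonal p.2, f p.1 q.1 q.2 =
      ∑ p ∈ antidiagonal n, ∑ q ∈ antidiagonal p.2, f q.1 p.1 q.2 := by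
  rw [sum_sigma', sum_sigma']
  refine sum_nbij' (fun s => ⟨(s.2.1, s.1.1 + s.2.2), (s.1.1, s.2.2)⟩)
    (fun s => ⟨(s.2.1, s.1.1 + s.2.2), (s.1.1, s.2.2)⟩) ?_ ?_ ?_ ?_ fun _ _ => rfl
  all_goals
    rintro ⟨⟨i, j⟩, ⟨k, l⟩⟩ h
    simp only [mem_sigma, HasAntidiagonal.mem_antidiagonal, Sigma.mk.injEq, Prod.mk.injEq,
      heq_eq_eq, true_and, and_true] at h ⊢
    omega

-- Expand `y ^ k = ((y - x) + x) ^ k` and resum the powers of `x` by Chu–Vandermonde.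
lemma lagrangePoly_eq_sum_sub_pow (a b x y : R) (n : ℕ) :
    lagrangePoly a b x y n = ∑ p ∈ antidiagonal n,
      multichoose b p.1 * (y - x) ^ p.1 * (multichoose (a + b + p.1) p.2 * x ^ p.2) := by
  have split_pow (k : ℕ) := multichoose_mul_add_pow b (y - x) x k
  simp only [sub_add_cancel] at split_pow
  simp_rw [lagrangePoly, split_pow, mul_sum]
  rw [sum_antidiagonal_antidiagonal_left_comm fun j k i =>
    multichoose a j * x ^ j * (multichoose b k * (y - x) ^ k * (multichoose (b + k) i * x ^ i))]
  refine sum_congr rfl fun p _ => ?_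
  rw [add_assoc, ← sum_antidiagonal_multichoose_mul, sum_mul, mul_sum]
  refine sum_congr rfl fun q hq => ?_
  rw [← mem_antidiagonal.mp hq]
  ring

lemma sum_antidiagonal_add_add_of_eq_zero {S : Type*} [NonUnitalNonAssocSemiring S]
    {f g : ℕ → S} {p q : ℕ} (hf : ∀ j < p, f j = 0) (hg : ∀ l < q, g l = 0) (i : ℕ) :
    ∑ s ∈ antidiagonal (p + q + i), f s.1 * g s.2 =
      ∑ s ∈ antidiagonal i, f (p + s.1) * g (q + s.2) := by
  symm
  refine sum_of_injOn (fun s => (p + s.1, q + s.2)) ?_ ?_ ?_ fun _ _ => rfl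
  · intro s _ t _ h
    simpa [Prod.ext_iff] using h
  · intro s hs
    simp only [mem_coe, HasAntidiagonal.mem_antidiagonal] at hs ⊢
    omega
  · rintro ⟨j, l⟩ hjl hnot
    rw [HasAntidiagonal.mem_antidiagonal] at hjl
    rcases lt_or_ge j p with hj | hj
    · rw [hf j hj, zero_mul]
    rcases lt_or_ge l q with hl | hl
    · rw [hg l hl, mul_zero]
    refine absurd ⟨(j - p, l - q), ?_, ?_⟩ hnot
    · simp only [mem_coe, HasAntidiagonal.mem_antidiagonal]
      omega
    · simp only [Nat.add_sub_cancel' hj, Nat.add_sub_cancel' hl]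

lemma choose_mul_lagrangePoly_add (a b x y : R) (k i : ℕ) :
    ((k + i).choose k : R) * lagrangePoly a b x y (k + i) = ∑ p ∈ antidiagonal k,
      multichoose a p.1 * x ^ p.1 * (multichoose b p.2 * y ^ p.2) *
        lagrangePoly (a + p.1) (b + p.2) x y i := by
  have vandermonde : ∀ s ∈ antidiagonal (k + i), ((k + i).choose k : R) =
      ∑ p ∈ antidiagonal k, (s.1.choose p.1 : R) * s.2.choose p.2 := fun s hs => by
    rw [← mem_antidiagonal.mp hs, Nat.add_choose_eq]
    push_cast
    rfl
  calc _ = ∑ p ∈ antidiagonal k, ∑ s ∈ antidiagonal (k + i),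
        s.1.choose p.1 * (multichoose a s.1 * x ^ s.1) *
          (s.2.choose p.2 * (multichoose b s.2 * y ^ s.2)) := by
        rw [sum_comm, lagrangePoly, mul_sum]
        refine sum_congr rfl fun s hs => ?_
        rw [vandermonde s hs, sum_mul]
        exact sum_congr rfl fun p _ => by ring
    _ = _ := by
        refine sum_congr rfl fun p hp => ?_
        rw [← mem_antidiagonal.mp hp, sum_antidiagonal_add_add_of_eq_zero
          (f := fun j => j.choose p.1 * (multichoose a j * x ^ j))
          (g := fun l => l.choose p.2 * (multichoose b l * y ^ l))
          (fun j hj => by simp [Nat.choose_eq_zero_of_lt hj])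
          (fun l hl => by simp [Nat.choose_eq_zero_of_lt hl]), lagrangePoly, mul_sum]
        refine sum_congr rfl fun s _ => ?_
        have ha := choose_mul_multichoose_add a p.1 s.1
        have hb := choose_mul_multichoose_add b p.2 s.2
        calc _ = ((p.1 + s.1).choose p.1 * multichoose a (p.1 + s.1)) *
              ((p.2 + s.2).choose p.2 * multichoose b (p.2 + s.2)) *
              (x ^ (p.1 + s.1) * y ^ (p.2 + s.2)) := by ring
          _ = _ := by rw [ha, hb]; ring

end Algebra

section Pochhammer

open scoped Nat

lemma multichoose_ne_zero {c : ℂ} (hc : ∀ n : ℕ, c ≠ -n) (n : ℕ) : multichoose c n ≠ 0 := by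
  induction n with
  | zero => simp
  | succ n ih =>
    have h := succ_mul_multichoose_succ c n
    have hcn : c + n ≠ 0 := fun h₀ => hc n (eq_neg_of_add_eq_zero_left h₀)
    exact right_ne_zero_of_mul (h ▸ mul_ne_zero hcn ih)

lemma cpoch_natCast (a : ℂ) (n : ℕ) : cpoch a n = n ! * multichoose a n := by
  rw [cpoch, if_pos (Int.natCast_nonneg n), Int.toNat_natCast]
  induction n with
  | zero => simp
  | succ n ih =>
    rw [prod_range_succ, ih, Nat.factorial_succ]
    push_cast
    linear_combination -(n ! : ℂ) * succ_mul_multichoose_succ a n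

lemma cpoch_neg_natCast (a : ℂ) (n : ℕ) :
    cpoch a (-n) = (-1) ^ n / (n ! * multichoose (1 - a) n) := by
  rcases n.eq_zero_or_pos with rfl | hn
  · simp [cpoch]
  have reflect : ∏ i ∈ range n, (a + (-n : ℤ) + i) = (-1) ^ n * cpoch (1 - a) n := by
    rw [cpoch, if_pos (Int.natCast_nonneg n), Int.toNat_natCast, ← prod_range_reflect,
      show (-1 : ℂ) ^ n = ∏ _i ∈ range n, -1 by simp, ← prod_mul_distrib]
    refine prod_congr rfl fun i hi => ?_
    rw [Nat.sub_sub, add_comm 1 i, Nat.cast_sub (mem_range.mp hi)]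
    push_cast
    ring
  rw [cpoch, if_neg (by omega), neg_neg, Int.toNat_natCast, reflect, cpoch_natCast, mul_inv,
    ← inv_pow, inv_neg_one, div_eq_mul_inv]

lemma cpoch_ne_zero {a : ℂ} (ha : ∀ n : ℤ, a ≠ n) (k : ℤ) : cpoch a k ≠ 0 := by
  have add_ne_zero (m : ℤ) : a + m ≠ 0 := fun h => ha (-m) (by
    push_cast
    exact eq_neg_of_add_eq_zero_left h)
  unfold cpoch
  split_ifs
  · exact prod_ne_zero_iff.mpr fun i _ => by exact_mod_cast add_ne_zero i
  · refine inv_ne_zero (prod_ne_zero_iff.mpr fun i _ => ?_)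
    simpa [add_assoc] using add_ne_zero (k + i)

lemma cpoch_add_one {a : ℂ} (ha : ∀ n : ℕ, a ≠ n + 1) (k : ℤ) :
    cpoch a (k + 1) = cpoch a k * (a + k) := by
  obtain ⟨n, rfl | rfl⟩ := k.eq_nat_or_neg
  · rw [← Nat.cast_succ, cpoch_natCast, cpoch_natCast, Nat.factorial_succ]
    push_cast
    linear_combination (n ! : ℂ) * succ_mul_multichoose_succ a n
  rcases n with _ | n
  · simp [cpoch]
  have ne_zero (m : ℕ) : multichoose (1 - a) m ≠ 0 :=
    multichoose_ne_zero (fun n h => ha n (by linear_combination -h)) m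
  have h₁ := succ_mul_multichoose_succ (1 - a) n
  have h₂ := ne_zero n
  have h₃ := ne_zero (n + 1)
  have h₄ : (n ! : ℂ) ≠ 0 := mod_cast n.factorial_ne_zero
  rw [show -((n + 1 : ℕ) : ℤ) + 1 = -n by push_cast; ring, cpoch_neg_natCast, cpoch_neg_natCast,
    Nat.factorial_succ]
  push_cast
  field_simp
  linear_combination (-1) ^ n * h₁

end Pochhammer

section InnerSum

/-- The coefficient of `x ^ j * y ^ k * z ^ m` in the triple series depends on `(j, k)` only through
`n = j + k`, up to the factor `multichoose α j * multichoose β k`. This is the remaining factor,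
with `c = α + β` and `g = γ`. It is set up for `n : ℤ` so that its recurrence can start
at `n = 0`. -/
noncomputable def ggrCoeff (c g : ℂ) (n : ℤ) (m : ℕ) : ℂ :=
  multichoose (1 - g) m * (cpoch g (n - m) / cpoch c (n - m))

variable {c g : ℂ}

lemma ggrCoeff_zero_left (c : ℂ) (hg : ∀ n : ℕ, g ≠ n + 1) (m : ℕ) :
    ggrCoeff c g 0 m = multichoose (1 - c) m := by
  have h := multichoose_ne_zero (c := 1 - g) (fun n h => hg n (by linear_combination -h)) m
  rw [ggrCoeff, zero_sub, cpoch_neg_natCast, cpoch_neg_natCast]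
  rcases eq_or_ne (multichoose (1 - c) m) 0 with h₀ | h₀
  · simp [h₀]
  · have hm : (m.factorial : ℂ) ≠ 0 := mod_cast m.factorial_ne_zero
    field_simp

lemma ggrCoeff_add_one_zero (hc : ∀ n : ℤ, c ≠ n) (hg : ∀ n : ℕ, g ≠ n + 1) (n : ℤ) :
    (c + n) * ggrCoeff c g (n + 1) 0 = (n + g) * ggrCoeff c g n 0 := by
  have h₁ := cpoch_ne_zero hc n
  have h₂ := cpoch_ne_zero hc (n + 1)
  have hc' (k : ℕ) : c ≠ k + 1 := mod_cast hc (k + 1)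
  simp only [ggrCoeff, Nat.cast_zero, sub_zero]
  rw [cpoch_add_one hc'] at h₂ ⊢
  rw [cpoch_add_one hg]
  have h₃ := right_ne_zero_of_mul h₂
  field_simp
  ring

lemma ggrCoeff_add_one_add_one (hc : ∀ n : ℤ, c ≠ n) (hg : ∀ n : ℕ, g ≠ n + 1) (n : ℤ) (m : ℕ) :
    (c + n) * ggrCoeff c g (n + 1) (m + 1) =
      (n + g) * ggrCoeff c g n (m + 1) + (n + (c - g)) * ggrCoeff c g n m -
        n * ggrCoeff c g (n - 1) m := by
  obtain ⟨r, rfl⟩ : ∃ r : ℤ, n = r + m + 1 := ⟨n - m - 1, by ring⟩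
  have e₁ : r + m + 1 + 1 - ((m + 1 : ℕ) : ℤ) = r + 1 := by push_cast; ring
  have e₂ : r + m + 1 - ((m + 1 : ℕ) : ℤ) = r := by push_cast; ring
  have e₃ : r + m + 1 - (m : ℤ) = r + 1 := by ring
  have e₄ : r + m + 1 - 1 - (m : ℤ) = r := by ring
  simp only [ggrCoeff, e₁, e₂, e₃, e₄]
  have h₁ := cpoch_ne_zero hc r
  have h₂ := cpoch_ne_zero hc (r + 1)
  have hc' (k : ℕ) : c ≠ k + 1 := mod_cast hc (k + 1)
  rw [cpoch_add_one hc'] at h₂ ⊢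
  rw [cpoch_add_one hg]
  have h₃ := right_ne_zero_of_mul h₂
  have h₄ := succ_mul_multichoose_succ (1 - g) m
  field_simp
  push_cast
  linear_combination (g - c) * cpoch g r * h₄

lemma hasSum_multichoose_mul_pow (a : ℂ) {t : ℂ} (ht : ‖t‖ < 1) :
    HasSum (fun n => multichoose a n * t ^ n) ((1 - t) ^ (-a)) := by
  have h := (Complex.one_div_one_sub_cpow_hasFPowerSeriesOnBall_zero (a := a)).hasSum
    (y := t) (by simpa [← ENNReal.ofReal_one, Metric.eball_ofReal] using ht)
  simpa [Ring.multichoose_eq, Complex.cpow_neg, mul_comm] using h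

lemma hasSum_ggrCoeff_add_one (hc : ∀ n : ℤ, c ≠ n) (hg : ∀ n : ℕ, g ≠ n + 1) {z s s' : ℂ} {n : ℤ}
    (h : HasSum (fun m => ggrCoeff c g n m * z ^ m) s)
    (h' : HasSum (fun m => n * (ggrCoeff c g (n - 1) m * z ^ m)) s') :
    HasSum (fun m => ggrCoeff c g (n + 1) m * z ^ m)
      (((n + g) * s + z * ((n + (c - g)) * s - s')) / (c + n)) := by
  have hcn : c + n ≠ 0 := fun h₀ => hc (-n) (by push_cast; linear_combination h₀)
  have tail := (((hasSum_nat_add_iff' 1).mpr h).mul_left (n + g)).add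
    (((h.mul_left (n + (c - g))).sub h').mul_left z)
  rw [← hasSum_nat_add_iff' 1]
  convert! tail.div_const (c + n) using 1
  · ext m
    rw [eq_div_iff hcn]
    linear_combination z ^ (m + 1) * ggrCoeff_add_one_add_one hc hg n m
  · rw [eq_div_iff hcn, sub_mul, div_mul_cancel₀ _ hcn, sum_range_one, sum_range_one]
    linear_combination -ggrCoeff_add_one_zero hc hg n

lemma hasSum_ggrCoeff (hc : ∀ n : ℤ, c ≠ n) (hg : ∀ n : ℕ, g ≠ n + 1) {z : ℂ} (hz : ‖z‖ < 1)
    (n : ℕ) :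
    HasSum (fun m => ggrCoeff c g n m * z ^ m)
      ((1 - z) ^ (c - 1) * (lagrangePoly g (c - g) 1 z n / multichoose c n)) := by
  have ne_zero := multichoose_ne_zero (c := c) fun n => by simpa using hc (-n)
  have h₀ : HasSum (fun m => ggrCoeff c g (0 : ℤ) m * z ^ m) ((1 - z) ^ (c - 1)) := by
    simpa [ggrCoeff_zero_left c hg] using hasSum_multichoose_mul_pow (1 - c) hz
  induction n using Nat.twoStepInduction with
  | zero => simpa [lagrangePoly_zero] using h₀
  | one =>
    have h₁ := hasSum_ggrCoeff_add_one hc hg (s' := 0) h₀ (by simp)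
    have hc₀ : c ≠ 0 := by simpa using hc 0
    convert! h₁ using 1
    simp only [lagrangePoly_one, mul_one, Ring.multichoose_one_right', pow_one, Int.cast_zero,
      zero_add, sub_zero, add_zero]
    field_simp
  | more n ih₀ ih₁ =>
    have h₂ := hasSum_ggrCoeff_add_one hc hg (n := (n + 1 : ℕ)) ih₁ (by
      simpa only [Nat.cast_succ, add_sub_cancel_right] using ih₀.mul_left _)
    have hcn : c + ((n + 1 : ℕ) : ℤ) ≠ 0 := fun h => hc (-(n + 1 : ℕ)) (by
      rw [Int.cast_neg, eq_neg_of_add_eq_zero_left h])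
    have ratio₀ : (n + 1) * (lagrangePoly g (c - g) 1 z n / multichoose c n) =
        (c + n) * lagrangePoly g (c - g) 1 z n / multichoose c (n + 1) := by
      rw [mul_div_assoc', div_eq_div_iff (ne_zero n) (ne_zero (n + 1))]
      linear_combination lagrangePoly g (c - g) 1 z n * succ_mul_multichoose_succ c n
    have ratio₂ : lagrangePoly g (c - g) 1 z (n + 2) / multichoose c (n + 2) * (c + n + 1) =
        (n + 2) * lagrangePoly g (c - g) 1 z (n + 2) / multichoose c (n + 1) := by
      have h := succ_mul_multichoose_succ c (n + 1)
      push_cast at h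
      rw [div_mul_eq_mul_div, div_eq_div_iff (ne_zero (n + 2)) (ne_zero (n + 1))]
      linear_combination -lagrangePoly g (c - g) 1 z (n + 2) * h
    convert! h₂ using 1
    rw [eq_div_iff hcn]
    push_cast
    linear_combination (1 - z) ^ (c - 1) * (ratio₂ + z * ratio₀ +
      lagrangePoly_add_two g (c - g) 1 z n / multichoose c (n + 1))

end InnerSum

section Bounds

lemma exists_norm_multichoose_div_le (a : ℂ) {c : ℂ} (hc : ∀ n : ℕ, c ≠ -n) :
    ∃ C : ℝ, 1 ≤ C ∧ ∀ n, ‖multichoose a n / multichoose c n‖ ≤ C ^ n := by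
  obtain ⟨C, hC⟩ := (tendsto_add_mul_div_add_mul_atTop_nhds a c (1 : ℂ)
    one_ne_zero).norm.bddAbove_range
  refine ⟨max 1 C, le_max_left _ _, fun n => ?_⟩
  induction n with
  | zero => simp
  | succ n ih =>
    have hcn : c + n ≠ 0 := fun h => hc n (eq_neg_of_add_eq_zero_left h)
    have h₀ := multichoose_ne_zero hc n
    have h₁ := multichoose_ne_zero hc (n + 1)
    have ratio : multichoose a (n + 1) / multichoose c (n + 1) =
        multichoose a n / multichoose c n * ((a + 1 * n) / (c + 1 * n)) := by
      rw [one_mul, div_mul_div_comm, div_eq_div_iff h₁ (mul_ne_zero h₀ hcn)]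
      have hn : (n : ℂ) + 1 ≠ 0 := n.cast_add_one_ne_zero
      apply mul_left_cancel₀ hn
      linear_combination multichoose c n * (c + n) * succ_mul_multichoose_succ a n -
        multichoose a n * (a + n) * succ_mul_multichoose_succ c n
    rw [ratio, norm_mul, pow_succ]
    gcongr
    exact (hC (Set.mem_range_self n)).trans (le_max_right _ _)

lemma exists_norm_multichoose_le (a : ℂ) : ∃ C : ℝ, 1 ≤ C ∧ ∀ n, ‖multichoose a n‖ ≤ C ^ n := by
  have one_ne_neg (n : ℕ) : (1 : ℂ) ≠ -n := fun h =>
    n.cast_add_one_ne_zero (R := ℂ) (by rw [h, add_neg_cancel])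
  simpa using exists_norm_multichoose_div_le a one_ne_neg

lemma exists_norm_cpoch_div_cpoch_le {c g : ℂ} (hc : ∀ n : ℕ, c ≠ -n) (hg : ∀ n : ℕ, g ≠ n + 1) :
    ∃ C : ℝ, 1 ≤ C ∧ ∀ k : ℤ, ‖cpoch g k / cpoch c k‖ ≤ C ^ k.natAbs := by
  obtain ⟨C, hC₁, hC⟩ := exists_norm_multichoose_div_le g hc
  obtain ⟨D, hD₁, hD⟩ := exists_norm_multichoose_div_le (1 - c) (c := 1 - g)
    fun n h => hg n (by linear_combination -h)
  refine ⟨max C D, hC₁.trans (le_max_left _ _), fun k => ?_⟩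
  obtain ⟨n, rfl | rfl⟩ := k.eq_nat_or_neg
  · have hn : (n.factorial : ℂ) ≠ 0 := mod_cast n.factorial_ne_zero
    rw [cpoch_natCast, cpoch_natCast, mul_div_mul_left _ _ hn, Int.natAbs_natCast]
    exact (hC n).trans (by gcongr; exact le_max_left _ _)
  · have hn : (n.factorial : ℂ) ≠ 0 := mod_cast n.factorial_ne_zero
    rw [cpoch_neg_natCast, cpoch_neg_natCast, div_div_div_cancel_left' _ _ (by simp),
      mul_div_mul_left _ _ hn, Int.natAbs_neg, Int.natAbs_natCast]
    exact (hD n).trans (by gcongr; exact le_max_right _ _)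

lemma exists_norm_lagrangePoly_le (a b : ℂ) :
    ∃ C : ℝ, 1 ≤ C ∧ ∀ x y n, ‖lagrangePoly a b x y n‖ ≤ (C * (‖x‖ + ‖y‖)) ^ n := by
  obtain ⟨A, hA₁, hA⟩ := exists_norm_multichoose_le a
  obtain ⟨B, hB₁, hB⟩ := exists_norm_multichoose_le b
  refine ⟨max A B, hA₁.trans (le_max_left _ _), fun x y n => ?_⟩
  rw [mul_add, (Commute.all _ _).add_pow']
  refine norm_sum_le_of_le _ fun p hp => ?_
  have choose_pos : 1 ≤ n.choose p.1 := Nat.choose_pos (Nat.le.intro (mem_antidiagonal.mp hp))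
  calc _ ≤ (max A B * ‖x‖) ^ p.1 * (max A B * ‖y‖) ^ p.2 := by
        simp only [norm_mul, norm_pow, mul_pow]
        gcongr
        · exact (hA _).trans (by gcongr; exact le_max_left _ _)
        · exact (hB _).trans (by gcongr; exact le_max_right _ _)
    _ ≤ _ := le_self_nsmul (by positivity) (by omega)

lemma tsum_eq_tsum_sum_antidiagonal {ι M : Type*} [AddCommMonoid ι] [HasAntidiagonal ι]
    [AddCommMonoid M] [TopologicalSpace M] [ContinuousAdd M] [T3Space M] {F : ι × ι → M}
    (hF : Summable F) :
    ∑' p, F p = ∑' n, ∑ p ∈ antidiagonal n, F p := by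
  have h := HasAntidiagonal.sigmaAntidiagonalEquivProd.summable_iff.mpr hF
  calc _ = ∑' s, (F ∘ HasAntidiagonal.sigmaAntidiagonalEquivProd) s :=
        (HasAntidiagonal.sigmaAntidiagonalEquivProd.tsum_eq F).symm
    _ = ∑' n, ∑' p : antidiagonal n, F p := h.tsum_sigma' fun n => (hasSum_fintype _).summable
    _ = _ := tsum_congr fun n => (antidiagonal n).tsum_subtype F

lemma summable_pow_mul_pow {r s : ℝ} (hr : 0 ≤ r) (hr₁ : r < 1) (hs : 0 ≤ s) (hs₁ : s < 1) :
    Summable fun p : ℕ × ℕ => r ^ p.1 * s ^ p.2 :=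
  (summable_geometric_of_lt_one hr hr₁).mul_of_nonneg (summable_geometric_of_lt_one hs hs₁)
    (fun _ => by positivity) fun _ => by positivity

lemma tsum_lagrangePoly_div_mul {a b x y : ℂ} {A : ℕ → ℂ} {C R : ℝ} (hab : ∀ n : ℕ, a + b ≠ -n)
    (hC : ∀ k, ‖multichoose b k / multichoose (a + b) k‖ ≤ C ^ k) (hA : ∀ n, ‖A n‖ ≤ R ^ n)
    (hx : 2 * R * ‖x‖ < 1) (hxy : 2 * R * C * ‖y - x‖ < 1) :
    ∑' n, lagrangePoly a b x y n / multichoose (a + b) n * A n =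
      ∑' k, multichoose b k / multichoose (a + b) k * (y - x) ^ k *
        ∑' i, ((k + i).choose k : ℂ) * A (k + i) * x ^ i := by
  have hC₀ : 0 ≤ C := (norm_nonneg _).trans ((hC 1).trans_eq (pow_one C))
  have hR₀ : 0 ≤ R := (norm_nonneg _).trans ((hA 1).trans_eq (pow_one R))
  set F : ℕ × ℕ → ℂ := fun p => multichoose b p.1 / multichoose (a + b) p.1 * (y - x) ^ p.1 *
    (((p.1 + p.2).choose p.1 : ℂ) * A (p.1 + p.2) * x ^ p.2) with hF
  have summable_F : Summable F := by
    refine .of_norm_bounded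
      (summable_pow_mul_pow (by positivity) hxy (by positivity) hx) fun p => ?_
    have choose_le : ((p.1 + p.2).choose p.1 : ℝ) ≤ 2 ^ (p.1 + p.2) :=
      mod_cast Nat.choose_le_two_pow _ _
    calc ‖F p‖ ≤ C ^ p.1 * ‖y - x‖ ^ p.1 * (2 ^ (p.1 + p.2) * R ^ (p.1 + p.2) * ‖x‖ ^ p.2) := by
          simp only [hF, norm_mul, norm_pow, Complex.norm_natCast]
          gcongr
          · exact hC _
          · exact hA _
      _ = _ := by ring
  have sum_F (n : ℕ) : lagrangePoly a b x y n / multichoose (a + b) n * A n =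
      ∑ p ∈ antidiagonal n, F p := by
    rw [lagrangePoly_eq_sum_sub_pow, sum_div, sum_mul]
    refine sum_congr rfl fun p hp => ?_
    have h := choose_mul_multichoose_add (a + b) p.1 p.2
    have h₁ := multichoose_ne_zero hab p.1
    have h₂ := multichoose_ne_zero hab n
    rw [← mem_antidiagonal.mp hp] at h₂ ⊢
    simp only [hF]
    field_simp
    linear_combination
      -multichoose b p.1 * (y - x) ^ p.1 * x ^ p.2 * A (p.1 + p.2) * h
  rw [tsum_congr sum_F, ← tsum_eq_tsum_sum_antidiagonal summable_F, summable_F.tsum_prod]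
  simp only [hF, tsum_mul_left]

end Bounds

section GeneratingFunctions

open Filter Topology

lemma one_sub_ne_zero_of_norm_lt_one {t : ℂ} (ht : ‖t‖ < 1) : 1 - t ≠ 0 :=
  (isUnit_one_sub_of_norm_lt_one ht).ne_zero

lemma one_sub_mul_one_sub_cpow {s t : ℂ} (hs : ‖s‖ < 1) (ht : ‖t‖ < 1) (a : ℂ) :
    ((1 - s) * (1 - t)) ^ a = (1 - s) ^ a * (1 - t) ^ a := by
  have hs₀ := one_sub_ne_zero_of_norm_lt_one hs
  have ht₀ := one_sub_ne_zero_of_norm_lt_one ht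
  have args := Complex.arg_one_add_mem_Ioo (z := -s) (by rwa [norm_neg])
  have argt := Complex.arg_one_add_mem_Ioo (z := -t) (by rwa [norm_neg])
  rw [← sub_eq_add_neg, Set.mem_Ioo] at args argt
  rw [Complex.cpow_def_of_ne_zero (mul_ne_zero hs₀ ht₀), Complex.cpow_def_of_ne_zero hs₀,
    Complex.cpow_def_of_ne_zero ht₀, Complex.log_mul hs₀ ht₀ ⟨by linarith, by linarith⟩, add_mul,
    Complex.exp_add]

lemma one_sub_cpow_neg_add_natCast {t : ℂ} (ht : ‖t‖ < 1) (a : ℂ) (k : ℕ) :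
    (1 - t) ^ (-(a + k)) = (1 - t) ^ (-a) / (1 - t) ^ k := by
  rw [neg_add, ← sub_eq_add_neg, Complex.cpow_sub _ _ (one_sub_ne_zero_of_norm_lt_one ht),
    Complex.cpow_natCast]

lemma hasSum_choose_mul_multichoose_mul_pow (a : ℂ) {t : ℂ} (ht : ‖t‖ < 1) (k : ℕ) :
    HasSum (fun i => ((k + i).choose k : ℂ) * multichoose a (k + i) * t ^ i)
      (multichoose a k * ((1 - t) ^ (-a) / (1 - t) ^ k)) := by
  rw [← one_sub_cpow_neg_add_natCast ht]
  simpa only [choose_mul_multichoose_add, mul_assoc] using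
    (hasSum_multichoose_mul_pow (a + k) ht).mul_left (multichoose a k)

lemma hasSum_lagrangePoly_mul_pow (a b : ℂ) {x y t : ℂ} (hx : ‖x * t‖ < 1) (hy : ‖y * t‖ < 1) :
    HasSum (fun n => lagrangePoly a b x y n * t ^ n)
      ((1 - x * t) ^ (-a) * (1 - y * t) ^ (-b)) := by
  have ha := hasSum_multichoose_mul_pow a hx
  have hb := hasSum_multichoose_mul_pow b hy
  have h := (summable_norm_sum_mul_antidiagonal_of_summable_norm ha.summable.norm
    hb.summable.norm).of_norm.hasSum
  rw [← tsum_mul_tsum_eq_tsum_sum_antidiagonal_of_summable_norm ha.summable.norm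
    hb.summable.norm, ha.tsum_eq, hb.tsum_eq] at h
  simp only [← lagrangePoly_mul_mul]
  exact h

lemma hasSum_choose_mul_lagrangePoly_mul_pow (a b : ℂ) {x y t : ℂ} (hx : ‖x * t‖ < 1)
    (hy : ‖y * t‖ < 1) (k : ℕ) :
    HasSum (fun i => ((k + i).choose k : ℂ) * lagrangePoly a b x y (k + i) * t ^ i)
      ((1 - x * t) ^ (-a) * (1 - y * t) ^ (-b) *
        lagrangePoly a b (x / (1 - x * t)) (y / (1 - y * t)) k) := by
  rw [lagrangePoly, mul_sum]
  simp only [choose_mul_lagrangePoly_add, sum_mul]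
  refine hasSum_sum fun p _ => ?_
  have h := (hasSum_lagrangePoly_mul_pow (a + p.1) (b + p.2) hx hy).mul_left
    (multichoose a p.1 * x ^ p.1 * (multichoose b p.2 * y ^ p.2))
  rw [one_sub_cpow_neg_add_natCast hx, one_sub_cpow_neg_add_natCast hy] at h
  convert! h using 1
  · ext i
    ring
  · rw [div_pow, div_pow]
    ring

lemma F21_eq_tsum_multichoose (a b c w : ℂ) :
    F21 a b c w = ∑' n, multichoose a n * multichoose b n / multichoose c n * w ^ n := by
  refine tsum_congr fun n => ?_
  have hn : (n.factorial : ℂ) ≠ 0 := mod_cast n.factorial_ne_zero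
  rw [cpoch_natCast, cpoch_natCast, cpoch_natCast, mul_mul_mul_comm, ← mul_assoc (n.factorial : ℂ),
    mul_div_mul_left _ _ (mul_ne_zero hn hn)]

lemma eventually_lt_one_of_continuousAt_zero {E : Type*} [TopologicalSpace E] [Zero E] {f : E → ℝ}
    (hf : ContinuousAt f 0) (h₀ : f 0 = 0) : ∀ᶠ p in 𝓝 0, f p < 1 :=
  hf.eventually_lt_const (h₀ ▸ one_pos)

lemma eventually_tsum_lagrangePoly_mul_multichoose (d : ℂ) {a b : ℂ} (hab : ∀ n : ℕ, a + b ≠ -n) :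
    ∀ᶠ p : ℂ × ℂ in 𝓝 0,
      ∑' n, lagrangePoly a b p.1 p.2 n / multichoose (a + b) n * multichoose d n =
        (1 - p.1) ^ (-d) * F21 d b (a + b) ((p.2 - p.1) / (1 - p.1)) := by
  obtain ⟨C, -, hC⟩ := exists_norm_multichoose_div_le b hab
  obtain ⟨R, -, hR⟩ := exists_norm_multichoose_le d
  have small {f : ℂ × ℂ → ℝ} (hf : Continuous f) := eventually_lt_one_of_continuousAt_zero
    hf.continuousAt
  filter_upwards [small (f := fun p => 2 * R * ‖p.1‖) (by fun_prop) (by simp),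
    small (f := fun p => 2 * R * C * ‖p.2 - p.1‖) (by fun_prop) (by simp),
    small (f := fun p => ‖p.1‖) (by fun_prop) (by simp)] with p hx hxy hx₁
  rw [tsum_lagrangePoly_div_mul hab hC hR hx hxy, F21_eq_tsum_multichoose, ← tsum_mul_left]
  refine tsum_congr fun k => ?_
  rw [(hasSum_choose_mul_multichoose_mul_pow d hx₁ k).tsum_eq, div_pow]
  ring

lemma eventually_tsum_lagrangePoly_mul_lagrangePoly {a b : ℂ} (c d : ℂ)
    (hab : ∀ n : ℕ, a + b ≠ -n) :
    ∀ᶠ p : ℂ × ℂ × ℂ in 𝓝 0,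
      ∑' n, lagrangePoly a b p.1 p.2.1 n / multichoose (a + b) n * lagrangePoly c d 1 p.2.2 n =
        (1 - p.1) ^ (-c) * (1 - p.1 * p.2.2) ^ (-d) *
          ∑' n, lagrangePoly c d ((p.2.1 - p.1) / (1 - p.1))
            (p.2.2 * (p.2.1 - p.1) / (1 - p.1 * p.2.2)) n /
              multichoose (a + b) n * multichoose b n := by
  obtain ⟨C, -, hC⟩ := exists_norm_multichoose_div_le b hab
  obtain ⟨R, -, hR⟩ := exists_norm_lagrangePoly_le c d
  have small {f : ℂ × ℂ × ℂ → ℝ} (hf : Continuous f) := eventually_lt_one_of_continuousAt_zero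
    hf.continuousAt
  filter_upwards [
    small (f := fun p => 2 * (R * (‖(1 : ℂ)‖ + ‖p.2.2‖)) * ‖p.1‖) (by fun_prop) (by simp),
    small (f := fun p => 2 * (R * (‖(1 : ℂ)‖ + ‖p.2.2‖)) * C * ‖p.2.1 - p.1‖) (by fun_prop)
      (by simp),
    small (f := fun p => ‖1 * p.1‖) (by fun_prop) (by simp),
    small (f := fun p => ‖p.2.2 * p.1‖) (by fun_prop) (by simp)] with ⟨x, y, z⟩ hx hxy hx₁ hxz
  rw [tsum_lagrangePoly_div_mul hab hC (hR 1 z) hx hxy, ← tsum_mul_left]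
  refine tsum_congr fun k => ?_
  have scale := lagrangePoly_mul_mul c d (1 / (1 - x)) (z / (1 - x * z)) (y - x) k
  rw [one_div_mul_eq_div, div_mul_eq_mul_div] at scale
  rw [(hasSum_choose_mul_lagrangePoly_mul_pow c d hx₁ hxz k).tsum_eq, one_mul, mul_comm z x, scale]
  ring

lemma one_sub_cpow_mul_one_sub_div_cpow {x y : ℂ} (hx : ‖x‖ < 1) (hxy : ‖(y - x) / (1 - x)‖ < 1)
    (b c : ℂ) :
    (1 - x) ^ (-c) * (1 - (y - x) / (1 - x)) ^ (-b) = (1 - x) ^ (b - c) * (1 - y) ^ (-b) := by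
  have hx₀ := one_sub_ne_zero_of_norm_lt_one hx
  have factor : 1 - y = (1 - x) * (1 - (y - x) / (1 - x)) := by
    field_simp
    ring
  rw [factor, one_sub_mul_one_sub_cpow hx hxy, ← mul_assoc, ← Complex.cpow_add _ _ hx₀]
  ring_nf

lemma sub_div_one_sub_div {K : Type*} [Field K] {x y z : K} (hx : 1 - x ≠ 0) (hy : 1 - y ≠ 0)
    (hxz : 1 - x * z ≠ 0) :
    (z * (y - x) / (1 - x * z) - (y - x) / (1 - x)) / (1 - (y - x) / (1 - x)) =
      (x - y) * (1 - z) / ((1 - y) * (1 - x * z)) := by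
  rw [one_sub_div hx, sub_sub_sub_cancel_right, div_sub_div _ _ hxz hx, div_div_div_eq,
    div_eq_div_iff (mul_ne_zero (mul_ne_zero hxz hx) hy) (mul_ne_zero hy hxz)]
  ring

lemma eventually_tsum_lagrangePoly_mul_lagrangePoly_eq_F21 {a b c d : ℂ}
    (hab : ∀ n : ℕ, a + b ≠ -n) (hcd : c + d = a + b) :
    ∀ᶠ p : ℂ × ℂ × ℂ in 𝓝 0,
      ∑' n, lagrangePoly a b p.1 p.2.1 n / multichoose (a + b) n * lagrangePoly c d 1 p.2.2 n =
        (1 - p.1 * p.2.2) ^ (-d) * (1 - p.1) ^ (b - c) * (1 - p.2.1) ^ (-b) *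
          F21 b d (a + b) ((p.1 - p.2.1) * (1 - p.2.2) / ((1 - p.2.1) * (1 - p.1 * p.2.2))) := by
  have continuousAt_arg₁ : ContinuousAt (fun p : ℂ × ℂ × ℂ => (p.2.1 - p.1) / (1 - p.1)) 0 :=
    .div (by fun_prop) (by fun_prop) (by simp)
  have continuousAt_arg₂ :
      ContinuousAt (fun p : ℂ × ℂ × ℂ => p.2.2 * (p.2.1 - p.1) / (1 - p.1 * p.2.2)) 0 :=
    .div (by fun_prop) (by fun_prop) (by simp)
  have tendsto_args := continuousAt_arg₁.tendsto.prodMk_nhds continuousAt_arg₂.tendsto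
  simp only [Prod.fst_zero, Prod.snd_zero, sub_zero, mul_zero, zero_div, Prod.mk_zero_zero]
    at tendsto_args
  have small {f : ℂ × ℂ × ℂ → ℂ} (hf : ContinuousAt f 0) (h₀ : f 0 = 0) :
      ∀ᶠ p in 𝓝 0, ‖f p‖ < 1 := eventually_lt_one_of_continuousAt_zero hf.norm (by simp [h₀])
  filter_upwards [eventually_tsum_lagrangePoly_mul_lagrangePoly c d hab,
    tendsto_args.eventually (eventually_tsum_lagrangePoly_mul_multichoose b (hcd ▸ hab)),
    small continuousAt_arg₁ (by simp), small (f := fun p => p.1) (by fun_prop) rfl,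
    small (f := fun p => p.2.1) (by fun_prop) rfl,
    small (f := fun p => p.1 * p.2.2) (by fun_prop) (by simp)]
    with ⟨x, y, z⟩ outer inner harg hx hy hxz
  dsimp only at outer inner harg hx hy hxz ⊢
  have hx₀ := one_sub_ne_zero_of_norm_lt_one hx
  have hy₀ := one_sub_ne_zero_of_norm_lt_one hy
  have hxz₀ := one_sub_ne_zero_of_norm_lt_one hxz
  rw [hcd, sub_div_one_sub_div hx₀ hy₀ hxz₀] at inner
  rw [outer, inner]
  linear_combination (1 - x * z) ^ (-d) *
    F21 b d (a + b) ((x - y) * (1 - z) / ((1 - y) * (1 - x * z))) *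
      one_sub_cpow_mul_one_sub_div_cpow hx harg b c

end GeneratingFunctions

section TripleSeries

open Filter Topology

lemma ggrTerm_eq (α β γ x y z : ℂ) (j k m : ℕ) :
    ggrTerm α β γ x y z (j, k, m) = multichoose α j * x ^ j * (multichoose β k * y ^ k) *
      (ggrCoeff (α + β) γ (j + k : ℕ) m * z ^ m) := by
  have hj : (j.factorial : ℂ) ≠ 0 := mod_cast j.factorial_ne_zero
  have hk : (k.factorial : ℂ) ≠ 0 := mod_cast k.factorial_ne_zero
  have hm : (m.factorial : ℂ) ≠ 0 := mod_cast m.factorial_ne_zero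
  simp only [ggrTerm, ggrCoeff, cpoch_natCast, Nat.cast_add]
  field_simp

lemma exists_norm_ggrCoeff_le {c g : ℂ} (hc : ∀ n : ℕ, c ≠ -n) (hg : ∀ n : ℕ, g ≠ n + 1) :
    ∃ C : ℝ, 1 ≤ C ∧ ∀ n m : ℕ, ‖ggrCoeff c g n m‖ ≤ C ^ (n + m) := by
  obtain ⟨C, hC₁, hC⟩ := exists_norm_multichoose_le (1 - g)
  obtain ⟨D, hD₁, hD⟩ := exists_norm_cpoch_div_cpoch_le hc hg
  refine ⟨C * D, one_le_mul_of_one_le_of_one_le hC₁ hD₁, fun n m => ?_⟩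
  rw [ggrCoeff, norm_mul, mul_pow]
  gcongr
  · exact (hC m).trans (pow_le_pow_right₀ hC₁ (by omega))
  · exact (hD _).trans (pow_le_pow_right₀ hD₁ (by omega))

lemma eventually_summable_norm_ggrTerm {α β γ : ℂ} (hαβ : ∀ n : ℕ, α + β ≠ -n)
    (hγ : ∀ n : ℕ, γ ≠ n + 1) :
    ∀ᶠ p : ℂ × ℂ × ℂ in 𝓝 0, Summable fun q => ‖ggrTerm α β γ p.1 p.2.1 p.2.2 q‖ := by
  obtain ⟨A, hA₁, hA⟩ := exists_norm_multichoose_le α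
  obtain ⟨B, hB₁, hB⟩ := exists_norm_multichoose_le β
  obtain ⟨C, hC₁, hC⟩ := exists_norm_ggrCoeff_le hαβ hγ
  have small {f : ℂ × ℂ × ℂ → ℝ} (hf : Continuous f) := eventually_lt_one_of_continuousAt_zero
    hf.continuousAt
  filter_upwards [small (f := fun p => A * C * ‖p.1‖) (by fun_prop) (by simp),
    small (f := fun p => B * C * ‖p.2.1‖) (by fun_prop) (by simp),
    small (f := fun p => C * ‖p.2.2‖) (by fun_prop) (by simp)] with p hx hy hz
  refine .of_nonneg_of_le (fun _ => norm_nonneg _) (fun ⟨j, k, m⟩ => ?_)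
    ((summable_geometric_of_lt_one (by positivity) hx).mul_of_nonneg
      (summable_pow_mul_pow (by positivity) hy (by positivity) hz)
      (fun _ => by positivity) fun _ => by positivity)
  rw [ggrTerm_eq]
  calc ‖multichoose α j * p.1 ^ j * (multichoose β k * p.2.1 ^ k) *
          (ggrCoeff (α + β) γ (j + k : ℕ) m * p.2.2 ^ m)‖
      ≤ A ^ j * ‖p.1‖ ^ j * (B ^ k * ‖p.2.1‖ ^ k) * (C ^ (j + k + m) * ‖p.2.2‖ ^ m) := by
        simp only [norm_mul, norm_pow]
        gcongr
        · exact hA _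
        · exact hB _
        · exact hC _ _
    _ = _ := by ring

lemma tsum_ggrTerm_eq {α β γ x y z : ℂ} (hαβ : ∀ n : ℤ, α + β ≠ n) (hγ : ∀ n : ℕ, γ ≠ n + 1)
    (hz : ‖z‖ < 1) (hs : Summable (ggrTerm α β γ x y z)) :
    ∑' q, ggrTerm α β γ x y z q = (1 - z) ^ (α + β - 1) *
      ∑' n, lagrangePoly α β x y n / multichoose (α + β) n *
        lagrangePoly γ (α + β - γ) 1 z n := by
  set G : ℕ → ℂ := fun n =>
    (1 - z) ^ (α + β - 1) * (lagrangePoly γ (α + β - γ) 1 z n / multichoose (α + β) n) with hG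
  have sum_inner (p : ℕ × ℕ) : HasSum (fun m => ggrTerm α β γ x y z (p.1, p.2, m))
      (multichoose α p.1 * x ^ p.1 * (multichoose β p.2 * y ^ p.2) * G (p.1 + p.2)) := by
    simpa only [ggrTerm_eq] using (hasSum_ggrCoeff hαβ hγ hz (p.1 + p.2)).mul_left _
  have hasSum_pairs := ((Equiv.prodAssoc ℕ ℕ ℕ).hasSum_iff.mpr hs.hasSum).prod_fiberwise sum_inner
  rw [← hasSum_pairs.tsum_eq, tsum_eq_tsum_sum_antidiagonal hasSum_pairs.summable, ← tsum_mul_left]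
  refine tsum_congr fun n => ?_
  calc _ = ∑ p ∈ antidiagonal n,
        multichoose α p.1 * x ^ p.1 * (multichoose β p.2 * y ^ p.2) * G n :=
        sum_congr rfl fun p hp => by rw [mem_antidiagonal.mp hp]
    _ = lagrangePoly α β x y n * G n := (sum_mul ..).symm
    _ = _ := by simp only [hG]; ring

end TripleSeries

theorem ggr_triple_sum_eq_first_form_general (α β γ : ℂ)
    (hαβ : ∀ n : ℤ, α + β ≠ (n : ℂ)) (hγ : ∀ n : ℕ, γ ≠ n + 1) :
    ∃ ε : ℝ, 0 < ε ∧ ∀ x y z : ℂ, ‖x‖ < ε → ‖y‖ < ε → ‖z‖ < ε →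
      Summable (fun p : ℕ × ℕ × ℕ => ‖ggrTerm α β γ x y z p‖) ∧
      (∑' p : ℕ × ℕ × ℕ, ggrTerm α β γ x y z p) =
        (1 - z) ^ (α + β - 1) * (1 - x * z) ^ (γ - α - β) * (1 - x) ^ (β - γ) *
          (1 - y) ^ (-β) *
          F21 β (α + β - γ) (α + β) ((x - y) * (1 - z) / ((1 - y) * (1 - x * z))) := by
  have hαβ' (n : ℕ) : α + β ≠ -n := mod_cast hαβ (-n)
  obtain ⟨ε, hε, h⟩ := Metric.eventually_nhds_iff.mp <|
    (eventually_summable_norm_ggrTerm hαβ' hγ).and <|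
      eventually_tsum_lagrangePoly_mul_lagrangePoly_eq_F21 hαβ' (add_sub_cancel γ (α + β))
  refine ⟨min ε 1, lt_min hε one_pos, fun x y z hx hy hz => ?_⟩
  rw [lt_min_iff] at hx hy hz
  obtain ⟨summable_term, sum_lagrange⟩ := @h (x, y, z)
    (by simpa only [dist_zero_right, Prod.norm_mk, max_lt_iff] using ⟨hx.1, hy.1, hz.1⟩)
  refine ⟨summable_term, ?_⟩
  rw [tsum_ggrTerm_eq hαβ hγ hz.2 summable_term.of_norm, sum_lagrange, neg_sub, sub_sub γ α β]
  ring

theorem ggr_triple_sum_eq_first_form (α β γ : ℂ)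
    (hαβ : ∀ n : ℤ, α + β ≠ (n : ℂ)) (hγ : ∀ n : ℤ, γ ≠ (n : ℂ)) :
    ∃ ε : ℝ, 0 < ε ∧ ∀ x y z : ℂ, ‖x‖ < ε → ‖y‖ < ε → ‖z‖ < ε →
      Summable (fun p : ℕ × ℕ × ℕ => ‖ggrTerm α β γ x y z p‖) ∧
      (∑' p : ℕ × ℕ × ℕ, ggrTerm α β γ x y z p) =
        (1 - z) ^ (α + β - 1) * (1 - x * z) ^ (γ - α - β) * (1 - x) ^ (β - γ) *
          (1 - y) ^ (-β) *
          F21 β (α + β - γ) (α + β) ((x - y) * (1 - z) / ((1 - y) * (1 - x * z))) :=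
  ggr_triple_sum_eq_first_form_general α β γ hαβ fun n => mod_cast hγ (n + 1)
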